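/- Let J ⊆ Δ, let L be a commutative ring, and let D ⊆ Φ be a J-quasi-parabolic subset. Then ∂ maps ⊕_{α ∈ Δ\J} L[W^{J∪{α}}(D)] into L[W^J(D)], and the resulting sequence ⊕_{α ∈ Δ\J} L[W^{J∪{α}}(D)] → L[W^J(D)] → M_J(L), obtained by restricting ∂ and ∇, is exact at L[W^J(D)]: an element of L[W^J(D)] lies in the kernel of the restriction of ∇ if and only if it lies in the image of the restriction of ∂. -/

import Mathlib

/-! Common framework: a reduced (crystallographic) root system `Φ` in a real vector
space `V`, with Weyl group `W` (generated by the reflections `s_α`, `α ∈ Φ`, inside the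
group of linear automorphisms of `V`), a base `Δ` of simple roots with positive system
`Pos = Φ⁺`, and the associated combinatorics. -/

open scoped Classical Pointwise

namespace PaperSp

variable {V : Type} [AddCommGroup V] [Module ℝ V]

/-- The data of a reduced crystallographic root system in `V`:  a finite spanning set
`Phi` of nonzero vectors together with, for each root `α`, a linear functional
`pairing α = ⟨·, α∨⟩` taking the value `2` at `α`, such that the associated reflections
`s_α : β ↦ β − ⟨β, α∨⟩α` preserve `Phi`, all pairings are integral, and the only
multiples of a root `α` which are roots are `±α`. -/
structure RootSystemData (V : Type) [AddCommGroup V] [Module ℝ V] : Type where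
  Phi : Set V
  pairing : V → V →ₗ[ℝ] ℝ
  pairing_self : ∀ α, α ∈ Phi → pairing α α = 2
  finite : Phi.Finite
  span_top : Submodule.span ℝ Phi = ⊤
  zero_not_mem : (0 : V) ∉ Phi
  crystallographic : ∀ α ∈ Phi, ∀ β ∈ Phi, ∃ n : ℤ, pairing α β = (n : ℝ)
  reduced : ∀ α ∈ Phi, ∀ t : ℝ, t • α ∈ Phi → t = 1 ∨ t = -1
  reflect_mem : ∀ α ∈ Phi, ∀ β ∈ Phi, β - pairing α β • α ∈ Phi

/-- The reflection `s_α` associated to a root `α` (the identity if `α ∉ Φ`). -/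
noncomputable def RootSystemData.refl (R : RootSystemData V) (α : V) : V ≃ₗ[ℝ] V :=
  if h : α ∈ R.Phi then Module.reflection (R.pairing_self α h) else 1

/-- The set of reflections `{s_α : α ∈ K}` associated to a set `K` of roots. -/
noncomputable def refls (R : RootSystemData V) (K : Set V) : Set (V ≃ₗ[ℝ] V) :=
  {s | ∃ α ∈ K, s = R.refl α}

/-- The Weyl group `W`, generated by all reflections `s_α`, `α ∈ Φ`. -/
noncomputable def weylGroup (R : RootSystemData V) : Subgroup (V ≃ₗ[ℝ] V) :=
  Subgroup.closure (refls R R.Phi)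

/-- The subgroup `W_J` generated by the reflections `s_α`, `α ∈ J`. -/
noncomputable def WsubJ (R : RootSystemData V) (J : Set V) : Subgroup (V ≃ₗ[ℝ] V) :=
  Subgroup.closure (refls R J)

/-- The word length of `w` with respect to a generating set `S` of a group. -/
noncomputable def lengthWrt {G : Type*} [Group G] (S : Set G) (w : G) : ℕ :=
  sInf {n | ∃ ls : List G, ls.length = n ∧ (∀ x ∈ ls, x ∈ S) ∧ ls.prod = w}

/-- The length function `ℓ` on `W` with respect to the simple reflections
`S = {s_α : α ∈ Δ}`. -/
noncomputable def len (R : RootSystemData V) (Δ : Set V) (w : V ≃ₗ[ℝ] V) : ℕ :=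
  lengthWrt (refls R Δ) w

/-- `Pos` and `Δ` form a positive system with base `Δ` for the root system `R`:
`Φ = Pos ⊔ (−Pos)`, `Δ ⊆ Pos` is linearly independent, and every positive root is a
nonnegative integral combination of simple roots. -/
structure IsBase (R : RootSystemData V) (Pos Δ : Set V) : Prop where
  pos_sub : Pos ⊆ R.Phi
  mem_or_neg : ∀ α ∈ R.Phi, α ∈ Pos ∨ -α ∈ Pos
  not_both : ∀ α : V, ¬(α ∈ Pos ∧ -α ∈ Pos)
  delta_sub : Δ ⊆ Pos
  indep : LinearIndependent ℝ (fun a : Δ => (a : V))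
  decomp : ∀ β ∈ Pos, ∃ c : V →₀ ℕ, (c.support : Set V) ⊆ Δ ∧
    β = c.sum (fun a m => (m : ℝ) • a)

/-- The set `W^J = {w ∈ W : w(α) ∈ Φ⁺ for all α ∈ J}` of minimal length representatives
of `W/W_J`. -/
noncomputable def WupJ (R : RootSystemData V) (Pos : Set V) (J : Set V) :
    Set (V ≃ₗ[ℝ] V) :=
  {w | w ∈ weylGroup R ∧ ∀ α ∈ J, w α ∈ Pos}

/-- The set `V^J = W^J \ ⋃_{α ∈ Δ\J} W^{J∪{α}}`. -/
noncomputable def VupJ (R : RootSystemData V) (Pos Δ : Set V) (J : Set V) :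
    Set (V ≃ₗ[ℝ] V) :=
  {w | w ∈ WupJ R Pos J ∧ ∀ α ∈ Δ, α ∉ J → w ∉ WupJ R Pos (J ∪ {α})}

/-- `Φ_J(1) = Φ⁻ \ (Φ⁻ ∩ W_J·J)`. -/
noncomputable def PhiJone (R : RootSystemData V) (Pos : Set V) (J : Set V) : Set V :=
  (R.Phi \ Pos) \ {β | ∃ v ∈ WsubJ R J, ∃ α ∈ J, β = v α}

/-- `Φ_J(w) = w · Φ_J(1)`. -/
noncomputable def PhiJ (R : RootSystemData V) (Pos : Set V) (J : Set V)
    (w : V ≃ₗ[ℝ] V) : Set V :=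
  (fun x => w x) '' (PhiJone R Pos J)

/-- `hProjJ R Pos J pJ` says that `pJ` is the projection `w ↦ (w)^J` sending an element
of `W` to the unique element of `W^J` in the coset `w W_J`. -/
noncomputable def IsProjJ (R : RootSystemData V) (Pos : Set V) (J : Set V)
    (pJ : (V ≃ₗ[ℝ] V) → (V ≃ₗ[ℝ] V)) : Prop :=
  ∀ w ∈ weylGroup R, pJ w ∈ WupJ R Pos J ∧ (pJ w)⁻¹ * w ∈ WsubJ R J

/-- The product `s_i ⋯ s_1` of the first `i` members of a sequence in a group. -/
noncomputable def chainProd {G : Type*} [Group G] (s : ℕ → G) (i : ℕ) : G :=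
  (((List.range' 1 i).map s).reverse).prod

/-- The chain `w^(0) = w`, `w^(i) = (s_i ⋯ s_1 w)^J` associated to `w` and a sequence
of simple reflections. -/
noncomputable def chainElt {G : Type*} [Group G] (pJ : G → G) (s : ℕ → G) (w : G)
    (i : ℕ) : G :=
  if i = 0 then w else pJ (chainProd s i * w)

/-- The partial order `<_J`:  `w <_J w'` iff there are simple reflections
`s_1, …, s_r` (`r ≥ 1`) such that, with `w^(i) = (s_i ⋯ s_1 w)^J`, the lengths
`ℓ(w^(i))` are strictly increasing and `w^(r) = w'`.  Taking `pJ = id`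
(and `J = ∅`) gives the weak left order `<_∅`. -/
noncomputable def ltJ {G : Type*} [Group G] (S : Set G) (ℓ : G → ℕ) (pJ : G → G)
    (w w' : G) : Prop :=
  ∃ r : ℕ, 1 ≤ r ∧ ∃ s : ℕ → G,
    (∀ m, 1 ≤ m → m ≤ r → s m ∈ S) ∧
    (∀ m, 1 ≤ m → m ≤ r → ℓ (chainElt pJ s w (m - 1)) < ℓ (chainElt pJ s w m)) ∧
    chainElt pJ s w r = w'

/-- `w` is the longest element of a subgroup `H` of `W` (with respect to `ℓ`). -/
noncomputable def IsLongestIn (R : RootSystemData V) (Δ : Set V)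
    (H : Subgroup (V ≃ₗ[ℝ] V)) (w : V ≃ₗ[ℝ] V) : Prop :=
  w ∈ H ∧ ∀ v ∈ H, len R Δ v ≤ len R Δ w

end PaperSp

namespace PaperSp

variable {V : Type} [AddCommGroup V] [Module ℝ V]

/-- The index type of the direct sum `⊕_{α ∈ Δ\J} L[W^{J∪{α}}]`. -/
noncomputable def MJdom (R : RootSystemData V) (Pos Δ J : Set V) : Type :=
  Σ a : ↥(Δ \ J), ↥(WupJ R Pos (J ∪ {(a : V)}))

/-- The map `∂ : ⊕_{α ∈ Δ\J} L[W^{J∪{α}}] → L[W^J]` sending the basis element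
`w ∈ W^{J∪{α}}` to the sum of all `w' ∈ W^J` with `w' W_J ⊆ w W_{J∪{α}}`. -/
noncomputable def MJd (R : RootSystemData V) (Pos Δ J : Set V)
    (L : Type) [CommRing L] :
    ((MJdom R Pos Δ J) →₀ L) →ₗ[L] ((↥(WupJ R Pos J)) →₀ L) :=
  Finsupp.lift _ L _ (fun x =>
    ∑ᶠ w' : ↥(WupJ R Pos J),
      if (↑w' : V ≃ₗ[ℝ] V) • ((WsubJ R J : Set (V ≃ₗ[ℝ] V)))
          ⊆ (↑(x.2) : V ≃ₗ[ℝ] V) • ((WsubJ R (J ∪ {(x.1 : V)}) : Set (V ≃ₗ[ℝ] V)))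
        then Finsupp.single w' (1 : L) else 0)

/-- The module `M_J(L)`:  the cokernel of `∂`. -/
noncomputable def MJmod (R : RootSystemData V) (Pos Δ J : Set V)
    (L : Type) [CommRing L] : Type :=
  ((↥(WupJ R Pos J)) →₀ L) ⧸ LinearMap.range (MJd R Pos Δ J L)

noncomputable instance (R : RootSystemData V) (Pos Δ J : Set V)
    (L : Type) [CommRing L] : AddCommGroup (MJmod R Pos Δ J L) :=
  Submodule.Quotient.addCommGroup _

noncomputable instance (R : RootSystemData V) (Pos Δ J : Set V)
    (L : Type) [CommRing L] : Module L (MJmod R Pos Δ J L) :=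
  Submodule.Quotient.module _

/-- The quotient map `∇ : L[W^J] → M_J(L)`. -/
noncomputable def MJnabla (R : RootSystemData V) (Pos Δ J : Set V)
    (L : Type) [CommRing L] :
    ((↥(WupJ R Pos J)) →₀ L) →ₗ[L] MJmod R Pos Δ J L :=
  Submodule.mkQ _

end PaperSp

namespace PaperSp

variable {V : Type} [AddCommGroup V] [Module ℝ V]

/-- A subset `D ⊆ Φ` is `J`-quasi-parabolic if it is the intersection of the sets
`Φ_J(w)` over some nonempty set of `w ∈ W`. -/
noncomputable def IsQuasiParabolic (R : RootSystemData V) (Pos J : Set V)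
    (D : Set V) : Prop :=
  ∃ Θ : Set (V ≃ₗ[ℝ] V), Θ.Nonempty ∧ Θ ⊆ (weylGroup R : Set (V ≃ₗ[ℝ] V)) ∧
    D = ⋂ w ∈ Θ, PhiJ R Pos J w

/-- `W^J(D) = {w ∈ W^J : D ⊆ Φ_J(w)}`. -/
noncomputable def WupJD (R : RootSystemData V) (Pos J D : Set V) :
    Set (V ≃ₗ[ℝ] V) :=
  {w | w ∈ WupJ R Pos J ∧ D ⊆ PhiJ R Pos J w}

lemma WupJD_subset (R : RootSystemData V) (Pos J D : Set V) :
    WupJD R Pos J D ⊆ WupJ R Pos J := fun _ h => h.1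

/-- The index type of `⊕_{α ∈ Δ\J} L[W^{J∪{α}}(D)]`. -/
noncomputable def MJdomD (R : RootSystemData V) (Pos Δ J D : Set V) : Type :=
  Σ a : ↥(Δ \ J), ↥(WupJD R Pos (J ∪ {(a : V)}) D)

/-- Inclusion `⊕_{α} L[W^{J∪{α}}(D)] ↪ ⊕_{α} L[W^{J∪{α}}]`. -/
noncomputable def inclDom (R : RootSystemData V) (Pos Δ J D : Set V)
    (L : Type) [CommRing L] :
    ((MJdomD R Pos Δ J D) →₀ L) →ₗ[L] ((MJdom R Pos Δ J) →₀ L) :=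
  Finsupp.lmapDomain L L
    (fun x => ⟨x.1, Set.inclusion (WupJD_subset R Pos (J ∪ {(x.1 : V)}) D) x.2⟩)

/-- Inclusion `L[W^J(D)] ↪ L[W^J]`. -/
noncomputable def inclCod (R : RootSystemData V) (Pos J D : Set V)
    (L : Type) [CommRing L] :
    ((↥(WupJD R Pos J D)) →₀ L) →ₗ[L] ((↥(WupJ R Pos J)) →₀ L) :=
  Finsupp.lmapDomain L L (Set.inclusion (WupJD_subset R Pos J D))


section Helpers

variable {R : RootSystemData V} {Pos Δ : Set V}

lemma refl_apply' {α : V} (h : α ∈ R.Phi) (x : V) :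
    R.refl α x = x - R.pairing α x • α := by
  unfold RootSystemData.refl
  rw [dif_pos h, Module.reflection_apply]

lemma refl_self' {α : V} (h : α ∈ R.Phi) : R.refl α α = -α := by
  rw [refl_apply' h, R.pairing_self α h, two_smul]; abel

lemma refl_refl' {α : V} (h : α ∈ R.Phi) (x : V) : R.refl α (R.refl α x) = x := by
  rw [refl_apply' h (R.refl α x), refl_apply' h x, map_sub, map_smul, R.pairing_self α h]
  simp only [smul_eq_mul, sub_smul, mul_smul, two_smul, smul_add]; abel

lemma refl_mul_self {α : V} (h : α ∈ R.Phi) : R.refl α * R.refl α = 1 := by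
  ext x; exact refl_refl' h x

lemma refl_inv' {α : V} (h : α ∈ R.Phi) : (R.refl α)⁻¹ = R.refl α :=
  inv_eq_of_mul_eq_one_left (refl_mul_self h)

lemma inv_app (w : V ≃ₗ[ℝ] V) (x : V) : w⁻¹ (w x) = x := by
  rw [← LinearEquiv.mul_apply, inv_mul_cancel]; rfl

lemma app_inv (w : V ≃ₗ[ℝ] V) (x : V) : w (w⁻¹ x) = x := by
  rw [← LinearEquiv.mul_apply, mul_inv_cancel]; rfl

lemma neg_mem_Phi {α : V} (h : α ∈ R.Phi) : -α ∈ R.Phi := by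
  have := R.reflect_mem α h α h
  rw [R.pairing_self α h, two_smul] at this
  convert this using 1; abel

lemma weyl_Phi {w : V ≃ₗ[ℝ] V} (hw : w ∈ weylGroup R) :
    ∀ β ∈ R.Phi, w β ∈ R.Phi := by
  refine Subgroup.closure_induction (p := fun w _ => ∀ β ∈ R.Phi, w β ∈ R.Phi)
    ?_ ?_ ?_ ?_ hw
  · rintro _ ⟨α, hα, rfl⟩ β hβ
    rw [refl_apply' hα]; exact R.reflect_mem α hα β hβ
  · intro β hβ; exact hβ
  · intro x y _ _ hx hy β hβ; exact hx _ (hy _ hβ)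
  · intro x _ hx β hβ
    have hmaps : Set.MapsTo x R.Phi R.Phi := hx
    have hs : Set.SurjOn x R.Phi R.Phi :=
      ((R.finite.injOn_iff_bijOn_of_mapsTo hmaps).1 (x.injective.injOn)).surjOn
    obtain ⟨γ, hγ, rfl⟩ := hs hβ
    rw [inv_app]; exact hγ

lemma refl_mem_weyl {α : V} (h : α ∈ R.Phi) : R.refl α ∈ weylGroup R :=
  Subgroup.subset_closure ⟨α, h, rfl⟩

lemma WsubJ_le_weyl {K : Set V} (hK : K ⊆ R.Phi) : WsubJ R K ≤ weylGroup R :=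
  Subgroup.closure_mono (by rintro _ ⟨α, hα, rfl⟩; exact ⟨α, hK hα, rfl⟩)

lemma WsubJ_mono {K K' : Set V} (hK : K ⊆ K') : WsubJ R K ≤ WsubJ R K' :=
  Subgroup.closure_mono (by rintro _ ⟨α, hα, rfl⟩; exact ⟨α, hK hα, rfl⟩)

lemma refl_mem_WsubJ {K : Set V} {α : V} (h : α ∈ K) : R.refl α ∈ WsubJ R K :=
  Subgroup.subset_closure ⟨α, h, rfl⟩

lemma weyl_finite (R : RootSystemData V) :
    (weylGroup R : Set (V ≃ₗ[ℝ] V)).Finite := by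
  have : Finite R.Phi := R.finite
  let F : weylGroup R → (R.Phi → R.Phi) := fun w β => ⟨w.1 β.1, weyl_Phi w.2 _ β.2⟩
  have hF : Function.Injective F := by
    intro w w' h
    apply Subtype.ext
    apply LinearEquiv.toLinearMap_injective
    refine LinearMap.ext_on (s := R.Phi) R.span_top ?_
    intro β hβ
    exact congrArg Subtype.val (congrFun h ⟨β, hβ⟩)
  have : Finite (weylGroup R) := Finite.of_injective F hF
  exact Set.toFinite _

lemma refl_conj {w : V ≃ₗ[ℝ] V} (hw : w ∈ weylGroup R) {α β : V} (hα : α ∈ R.Phi)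
    (hβ : β ∈ R.Phi) (h : w α = β) : w * R.refl α = R.refl β * w := by
  have key : R.pairing β = (R.pairing α).comp (w⁻¹ : V ≃ₗ[ℝ] V).toLinearMap := by
    refine Module.Dual.eq_of_preReflection_mapsTo (x := β) R.finite R.span_top
      (R.pairing_self β hβ) ?_ ?_ ?_
    · intro γ hγ
      rw [Module.preReflection_apply]; exact R.reflect_mem β hβ γ hγ
    · subst h
      simp only [LinearMap.comp_apply, LinearEquiv.coe_coe]
      rw [inv_app]; exact R.pairing_self α hα
    · intro γ hγ
      rw [Module.preReflection_apply]
      have h1 := R.reflect_mem α hα _ (weyl_Phi (inv_mem hw) γ hγ)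
      have h2 := weyl_Phi hw _ h1
      rw [map_sub, map_smul, app_inv, h] at h2
      exact h2
  ext x
  rw [LinearEquiv.mul_apply, LinearEquiv.mul_apply, refl_apply' hα, refl_apply' hβ, map_sub,
    map_smul, h, key]
  simp only [LinearMap.comp_apply, LinearEquiv.coe_coe]
  rw [inv_app]

namespace IsBase

lemma ext_fun (hB : IsBase R Pos Δ) (c : V → ℝ) : ∃ g : V →ₗ[ℝ] ℝ, ∀ α ∈ Δ, g α = c α := by
  have h : LinearIndepOn ℝ id Δ := hB.indep
  refine ⟨(Module.Basis.extend h).constr ℝ (fun i => c i), fun α hα => ?_⟩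
  have hm : α ∈ h.extend (Set.subset_univ Δ) := h.subset_extend _ hα
  have h1 := (Module.Basis.extend h).constr_basis ℝ (fun i => c i) ⟨α, hm⟩
  rwa [Module.Basis.extend_apply_self] at h1

lemma delta_Phi (hB : IsBase R Pos Δ) : Δ ⊆ R.Phi := hB.delta_sub.trans hB.pos_sub

lemma nonneg_of (hB : IsBase R Pos Δ) {g : V →ₗ[ℝ] ℝ} (hg : ∀ α ∈ Δ, 0 ≤ g α) :
    ∀ β ∈ Pos, 0 ≤ g β := by
  intro β hβ
  obtain ⟨c, hc, rfl⟩ := hB.decomp β hβ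
  rw [Finsupp.sum, map_sum]
  refine Finset.sum_nonneg fun a ha => ?_
  rw [map_smul, smul_eq_mul]
  exact mul_nonneg (Nat.cast_nonneg _) (hg a (hc ha))

lemma pos_of (hB : IsBase R Pos Δ) {g : V →ₗ[ℝ] ℝ} (hg : ∀ α ∈ Δ, 0 < g α) :
    ∀ β ∈ Pos, 0 < g β := by
  intro β hβ
  have hβ0 : β ≠ 0 := fun h => R.zero_not_mem (h ▸ hB.pos_sub hβ)
  obtain ⟨c, hc, rfl⟩ := hB.decomp β hβ
  rw [Finsupp.sum, map_sum]
  refine Finset.sum_pos (fun a ha => ?_) ?_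
  · rw [map_smul, smul_eq_mul]
    have : 0 < c a := Nat.pos_of_ne_zero (Finsupp.mem_support_iff.1 ha)
    exact mul_pos (Nat.cast_pos.2 this) (hg a (hc ha))
  · by_contra hne
    rw [Finset.not_nonempty_iff_eq_empty] at hne
    apply hβ0; rw [Finsupp.sum, hne, Finset.sum_empty]

lemma exists_ht (hB : IsBase R Pos Δ) :
    ∃ t : V →ₗ[ℝ] ℝ, ∀ β ∈ R.Phi, (β ∈ Pos ↔ 0 < t β) ∧ t β ≠ 0 := by
  obtain ⟨t, ht⟩ := hB.ext_fun (fun _ => 1)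
  have hp := hB.pos_of (g := t) (fun α hα => by rw [ht α hα]; exact one_pos)
  refine ⟨t, fun β hβ => ?_⟩
  rcases hB.mem_or_neg β hβ with h | h
  · exact ⟨⟨fun _ => hp β h, fun _ => h⟩, (hp β h).ne'⟩
  · have h1 := hp _ h
    rw [map_neg] at h1
    refine ⟨⟨fun h2 => hp β h2, fun h2 => by linarith⟩, by linarith⟩

/-- sign of a functional on positive roots in the span of `K` -/
lemma pos_span (hB : IsBase R Pos Δ) {K : Set V} (hK : K ⊆ Δ) {f : V →ₗ[ℝ] ℝ}
    (hf : ∀ α ∈ K, 0 < f α) {γ : V} (hγ : γ ∈ Pos) (hs : γ ∈ Submodule.span ℝ K) :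
    0 < f γ := by
  obtain ⟨g, hg⟩ := hB.ext_fun (fun a => if a ∈ K then f a else 1)
  have h1 : 0 < g γ := hB.pos_of (fun α hα => by
    rw [hg α hα]; split_ifs with h
    · exact hf α h
    · exact one_pos) γ hγ
  have h2 : f γ = g γ := by
    refine LinearMap.eqOn_span (s := K) (f := f) (g := g) ?_ hs
    intro a ha
    rw [hg a (hK ha), if_pos ha]
  rwa [h2]

lemma neg_pos_of (hB : IsBase R Pos Δ) {β : V} (hβ : β ∈ R.Phi) (h : β ∉ Pos) : -β ∈ Pos :=
  (hB.mem_or_neg β hβ).resolve_left h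

lemma simple_refl (hB : IsBase R Pos Δ) {α β : V} (hα : α ∈ Δ) (hβ : β ∈ Pos) (hne : β ≠ α) :
    R.refl α β ∈ Pos := by
  have hαP := hB.delta_Phi hα
  have hmem : R.refl α β ∈ R.Phi := by
    rw [refl_apply' hαP]; exact R.reflect_mem α hαP β (hB.pos_sub hβ)
  by_contra hcon
  have hneg := hB.neg_pos_of hmem hcon
  obtain ⟨g, hg⟩ := hB.ext_fun (fun a => if a = α then 0 else 1)
  have hgα : g α = 0 := by rw [hg α hα, if_pos rfl]
  have hg0 := hB.nonneg_of (g := g) (fun a ha => by rw [hg a ha]; split_ifs <;> norm_num)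
  have h1 := hg0 _ hneg
  have h2 := hg0 _ hβ
  rw [refl_apply' hαP, map_neg, map_sub, map_smul, hgα, smul_zero, sub_zero] at h1
  have h3 : g β = 0 := by linarith
  have hβP := hB.pos_sub hβ
  obtain ⟨c, hc, rfl⟩ := hB.decomp β hβ
  have hsupp : ∀ a ∈ c.support, a = α := by
    intro a ha
    by_contra hne
    rw [Finsupp.sum, map_sum] at h3
    have h4 := (Finset.sum_eq_zero_iff_of_nonneg (fun b hb => by
      rw [map_smul, smul_eq_mul, hg b (hc hb)]
      split_ifs <;> positivity)).1 h3 a ha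
    rw [map_smul, smul_eq_mul, hg a (hc ha), if_neg hne, mul_one] at h4
    exact (Finsupp.mem_support_iff.1 ha) (by exact_mod_cast h4)
  have hform : c.sum (fun a m => (m : ℝ) • a) = (c α : ℝ) • α := by
    rw [Finsupp.sum]
    refine Finset.sum_eq_single α (fun b hb hne => absurd (hsupp b hb) hne) ?_
    intro h; rw [Finsupp.notMem_support_iff.1 h]; simp
  rw [hform] at hβP hne
  rcases R.reduced α hαP _ hβP with h | h
  · rw [h, one_smul] at hne; exact hne rfl
  · have : (0 : ℝ) ≤ (c α : ℝ) := Nat.cast_nonneg _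
    linarith

end IsBase

lemma WsubJ_span (hB : IsBase R Pos Δ) {K : Set V} (hK : K ⊆ Δ) {v : V ≃ₗ[ℝ] V}
    (hv : v ∈ WsubJ R K) : ∀ x ∈ Submodule.span ℝ K, v x ∈ Submodule.span ℝ K := by
  have hfin : K.Finite := R.finite.subset (hK.trans hB.delta_Phi)
  refine Subgroup.closure_induction
    (p := fun v _ => ∀ x ∈ Submodule.span ℝ K, v x ∈ Submodule.span ℝ K) ?_ ?_ ?_ ?_ hv
  · rintro _ ⟨α, hα, rfl⟩ x hx
    rw [refl_apply' (hB.delta_Phi (hK hα))]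
    exact Submodule.sub_mem _ hx (Submodule.smul_mem _ _ (Submodule.subset_span hα))
  · intro x hx; exact hx
  · intro a b _ _ ha hb x hx; exact ha _ (hb _ hx)
  · intro a _ ha x hx
    have : FiniteDimensional ℝ (Submodule.span ℝ K) := FiniteDimensional.span_of_finite ℝ hfin
    have hle : (Submodule.span ℝ K).map a.toLinearMap ≤ Submodule.span ℝ K := by
      rintro _ ⟨y, hy, rfl⟩; exact ha y hy
    have heq := Submodule.eq_of_le_of_finrank_eq hle
      (LinearEquiv.finrank_map_eq a (Submodule.span ℝ K))
    rw [← heq] at hx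
    obtain ⟨y, hy, rfl⟩ := hx
    have : a⁻¹ (a y) ∈ Submodule.span ℝ K := by rw [inv_app]; exact hy
    exact this

lemma exch (hB : IsBase R Pos Δ) {K : Set V} (hK : K ⊆ Δ) {α : V} (hα : α ∈ Δ)
    (l : List V) (hl : ∀ a ∈ l, a ∈ K) (h : (l.map R.refl).prod α ∉ Pos) :
    ∃ l' : List V, (∀ a ∈ l', a ∈ K) ∧ l'.length + 1 = l.length ∧
      (l.map R.refl).prod = (l'.map R.refl).prod * R.refl α := by
  induction l with
  | nil => exact absurd (hB.delta_sub hα) h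
  | cons a l0 ih =>
    have haK : a ∈ K := hl a (by simp)
    have hl0 : ∀ b ∈ l0, b ∈ K := fun b hb => hl b (by simp [hb])
    by_cases h0 : (l0.map R.refl).prod α ∈ Pos
    · rw [List.map_cons, List.prod_cons, LinearEquiv.mul_apply] at h
      have heq : (l0.map R.refl).prod α = a := by
        by_contra hne
        exact h (hB.simple_refl (hK haK) h0 hne)
      refine ⟨l0, hl0, by simp, ?_⟩
      have hW : (l0.map R.refl).prod ∈ weylGroup R := by
        apply Subgroup.list_prod_mem
        intro x hx
        obtain ⟨b, hb, rfl⟩ := List.mem_map.1 hx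
        exact refl_mem_weyl (hB.delta_Phi (hK (hl0 b hb)))
      rw [List.map_cons, List.prod_cons,
        refl_conj hW (hB.delta_Phi hα) (hB.delta_Phi (hK haK)) heq]
    · obtain ⟨l', h1, h2, h3⟩ := ih hl0 h0
      refine ⟨a :: l', ?_, by simp [← h2], ?_⟩
      · intro b hb
        rcases List.mem_cons.1 hb with rfl | hb
        · exact haK
        · exact h1 b hb
      · rw [List.map_cons, List.prod_cons, h3, List.map_cons, List.prod_cons, mul_assoc]

lemma WsubJ_list (hB : IsBase R Pos Δ) {K : Set V} (hK : K ⊆ Δ) {v : V ≃ₗ[ℝ] V}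
    (hv : v ∈ WsubJ R K) : ∃ l : List V, (∀ a ∈ l, a ∈ K) ∧ (l.map R.refl).prod = v := by
  refine Subgroup.closure_induction
    (p := fun v _ => ∃ l : List V, (∀ a ∈ l, a ∈ K) ∧ (l.map R.refl).prod = v) ?_ ?_ ?_ ?_ hv
  · rintro _ ⟨α, hα, rfl⟩
    exact ⟨[α], by simpa using hα, by simp⟩
  · exact ⟨[], by simp, by simp⟩
  · rintro _ _ _ _ ⟨l, hl, rfl⟩ ⟨l', hl', rfl⟩
    refine ⟨l ++ l', ?_, by simp⟩
    intro a ha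
    rcases List.mem_append.1 ha with h | h
    · exact hl a h
    · exact hl' a h
  · rintro _ _ ⟨l, hl, rfl⟩
    refine ⟨l.reverse, fun a ha => hl a (List.mem_reverse.1 ha), ?_⟩
    rw [List.prod_inv_reverse, List.map_map, List.map_reverse]
    congr 2
    apply List.map_congr_left
    intro a ha
    exact (refl_inv' (hB.delta_Phi (hK (hl a ha)))).symm

lemma exists_neg (hB : IsBase R Pos Δ) {K : Set V} (hK : K ⊆ Δ) {v : V ≃ₗ[ℝ] V}
    (hv : v ∈ WsubJ R K) (hne : v ≠ 1) : ∃ α ∈ K, -(v α) ∈ Pos := by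
  have hex : ∃ n, ∃ l : List V, l.length = n ∧ (∀ a ∈ l, a ∈ K) ∧ (l.map R.refl).prod = v := by
    obtain ⟨l, hl⟩ := WsubJ_list hB hK hv
    exact ⟨_, l, rfl, hl⟩
  obtain ⟨l, hn, hl, hprod⟩ := Nat.find_spec hex
  rcases List.eq_nil_or_concat l with rfl | ⟨l', α, rfl⟩
  · exact absurd (by simpa using hprod.symm) hne
  · have hαK : α ∈ K := hl α (by simp)
    have hαP := hB.delta_Phi (hK hαK)
    have hl' : ∀ a ∈ l', a ∈ K := fun a ha => hl a (by simp [ha])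
    refine ⟨α, hαK, ?_⟩
    by_contra hcon
    have hv1 : v = (l'.map R.refl).prod * R.refl α := by rw [← hprod]; simp
    have h1 : (l'.map R.refl).prod α ∉ Pos := by
      rw [hv1, LinearEquiv.mul_apply, refl_self' hαP, map_neg, neg_neg] at hcon
      exact hcon
    obtain ⟨l'', h2, h3, h4⟩ := exch hB hK (hK hαK) l' hl' h1
    have h5 : (l''.map R.refl).prod = v := by
      rw [hv1, h4, mul_assoc, refl_mul_self hαP, mul_one]
    have h6 := Nat.find_min' hex ⟨l'', rfl, h2, h5⟩
    simp at hn
    omega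

lemma coset_unique (hB : IsBase R Pos Δ) {K : Set V} (hK : K ⊆ Δ) {f : V →ₗ[ℝ] ℝ}
    {w v : V ≃ₗ[ℝ] V} (h1 : ∀ α ∈ K, 0 < f (w α)) (hv : v ∈ WsubJ R K)
    (h2 : ∀ α ∈ K, 0 < f (w (v α))) : v = 1 := by
  by_contra hne
  obtain ⟨α, hα, hn⟩ := exists_neg hB hK hv hne
  have hs : -(v α) ∈ Submodule.span ℝ K :=
    Submodule.neg_mem _ (WsubJ_span hB hK hv _ (Submodule.subset_span hα))
  have := hB.pos_span hK (f := f.comp w.toLinearMap) (fun a ha => h1 a ha) hn hs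
  have h3 := h2 α hα
  simp only [LinearMap.comp_apply, LinearEquiv.coe_coe, map_neg] at this
  linarith

lemma exists_rho (hB : IsBase R Pos Δ) : ∃ lam : V, ∀ α ∈ Δ, R.refl α lam = lam - (2 : ℝ) • α := by
  have hfin : Pos.Finite := R.finite.subset hB.pos_sub
  refine ⟨∑ β ∈ hfin.toFinset, β, fun α hα => ?_⟩
  have hαP := hB.delta_Phi hα
  have hm : α ∈ hfin.toFinset := by simpa using hB.delta_sub hα
  rw [← Finset.add_sum_erase _ _ hm, map_add, refl_self' hαP, map_sum]
  have : ∑ x ∈ hfin.toFinset.erase α, R.refl α x = ∑ x ∈ hfin.toFinset.erase α, x := by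
    have hmaps : ∀ x ∈ hfin.toFinset.erase α, R.refl α x ∈ hfin.toFinset.erase α := by
      intro x hx
      rw [Finset.mem_erase, Set.Finite.mem_toFinset] at hx ⊢
      refine ⟨fun h => ?_, hB.simple_refl hα hx.2 hx.1⟩
      have h2 := refl_refl' hαP x
      rw [h, refl_self' hαP] at h2
      exact hB.not_both α ⟨hB.delta_sub hα, h2 ▸ hx.2⟩
    exact Finset.sum_nbij' (fun x => R.refl α x) (fun x => R.refl α x) hmaps hmaps
      (fun x _ => refl_refl' hαP x) (fun x _ => refl_refl' hαP x) (fun x _ => rfl)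
  rw [this, two_smul]; abel

/-- A functional which does not vanish on roots. -/
def Reg (R : RootSystemData V) (t : V →ₗ[ℝ] ℝ) : Prop := ∀ β ∈ R.Phi, t β ≠ 0

lemma coset_max (hB : IsBase R Pos Δ) {lam : V}
    (hlam : ∀ α ∈ Δ, R.refl α lam = lam - (2 : ℝ) • α) {K : Set V} (hK : K ⊆ Δ)
    {t : V →ₗ[ℝ] ℝ} (ht : Reg R t) {w : V ≃ₗ[ℝ] V} (hw : w ∈ weylGroup R) :
    ∃ v ∈ WsubJ R K, (∀ α ∈ K, 0 < t (w (v α))) ∧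
      ∀ v' ∈ WsubJ R K, v' ≠ v → t (w (v' lam)) < t (w (v lam)) := by
  have hKP := hK.trans hB.delta_Phi
  have hfin : (WsubJ R K : Set (V ≃ₗ[ℝ] V)).Finite := (weyl_finite R).subset (WsubJ_le_weyl hKP)
  have main : ∀ v ∈ WsubJ R K, (∀ v' ∈ WsubJ R K, t (w (v' lam)) ≤ t (w (v lam))) →
      ∀ α ∈ K, 0 < t (w (v α)) := by
    intro v hv hmax α hα
    by_contra hcon
    have h0 := ht _ (weyl_Phi hw _ (weyl_Phi (WsubJ_le_weyl hKP hv) _ (hKP hα)))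
    have h1 := hmax _ (mul_mem hv (refl_mem_WsubJ hα))
    rw [LinearEquiv.mul_apply, hlam α (hK hα)] at h1
    simp only [map_sub, map_smul, smul_eq_mul] at h1
    have : t (w (v α)) < 0 := lt_of_le_of_ne (not_lt.1 hcon) h0
    linarith
  obtain ⟨v, hv, hmax⟩ := Set.exists_max_image _ (fun v => t (w (v lam))) hfin ⟨1, one_mem _⟩
  refine ⟨v, hv, main v hv hmax, fun v' hv' hne => ?_⟩
  refine lt_of_le_of_ne (hmax v' hv') fun heq => hne ?_
  have h1 := main v' hv' (fun x hx => heq ▸ hmax x hx)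
  have h2 := coset_unique hB hK (f := t) (w := w * v) (v := v⁻¹ * v') (main v hv hmax)
    (mul_mem (inv_mem hv) hv') (fun α hα => by
      rw [← LinearEquiv.mul_apply, mul_assoc, mul_inv_cancel_left, LinearEquiv.mul_apply]
      exact h1 α hα)
  exact (inv_mul_eq_one.1 h2).symm

lemma lt_of_pos (hB : IsBase R Pos Δ) {lam : V}
    (hlam : ∀ α ∈ Δ, R.refl α lam = lam - (2 : ℝ) • α) {K : Set V} (hK : K ⊆ Δ)
    {t : V →ₗ[ℝ] ℝ} (ht : Reg R t) {w : V ≃ₗ[ℝ] V} (hw : w ∈ weylGroup R)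
    (h : ∀ α ∈ K, 0 < t (w α)) {v : V ≃ₗ[ℝ] V} (hv : v ∈ WsubJ R K) (hne : v ≠ 1) :
    t (w (v lam)) < t (w lam) := by
  obtain ⟨v0, hv0, h1, h2⟩ := coset_max hB hlam hK ht hw
  have : v0 = 1 := coset_unique hB hK h hv0 h1
  subst this
  exact h2 v hv hne

lemma gt_of_neg (hB : IsBase R Pos Δ) {lam : V}
    (hlam : ∀ α ∈ Δ, R.refl α lam = lam - (2 : ℝ) • α) {K : Set V} (hK : K ⊆ Δ)
    {t : V →ₗ[ℝ] ℝ} (ht : Reg R t) {w : V ≃ₗ[ℝ] V} (hw : w ∈ weylGroup R)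
    (h : ∀ α ∈ K, t (w α) < 0) {v : V ≃ₗ[ℝ] V} (hv : v ∈ WsubJ R K) (hne : v ≠ 1) :
    t (w lam) < t (w (v lam)) := by
  have := lt_of_pos hB hlam hK (t := -t) (fun β hβ => by simpa using ht β hβ) hw
    (fun α hα => by simpa using h α hα) hv hne
  simpa using this

lemma mem_PhiJ {K : Set V} {w : V ≃ₗ[ℝ] V} {β : V} :
    β ∈ PhiJ R Pos K w ↔ w⁻¹ β ∈ PhiJone R Pos K := by
  constructor
  · rintro ⟨γ, hγ, rfl⟩
    show w⁻¹ (w γ) ∈ _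
    rw [inv_app]; exact hγ
  · intro h; exact ⟨_, h, app_inv w β⟩

lemma PhiJone_refl (hB : IsBase R Pos Δ) {K : Set V} (hK : K ⊆ Δ) {α : V} (hα : α ∈ K) {γ : V}
    (hγ : γ ∈ PhiJone R Pos K) : R.refl α γ ∈ PhiJone R Pos K := by
  obtain ⟨⟨hP, hn⟩, hnot⟩ := hγ
  have hαP := hB.delta_Phi (hK hα)
  refine ⟨⟨weyl_Phi (refl_mem_weyl hαP) _ hP, ?_⟩, ?_⟩
  · intro hpos
    have h1 := hB.neg_pos_of hP hn
    have h2 : -γ ≠ α := by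
      intro h
      apply hnot
      refine ⟨R.refl α, refl_mem_WsubJ hα, α, hα, ?_⟩
      rw [refl_self' hαP, ← h, neg_neg]
    have h3 := hB.simple_refl (hK hα) h1 h2
    rw [map_neg] at h3
    exact hB.not_both _ ⟨hpos, h3⟩
  · rintro ⟨v, hv, a, ha, h⟩
    apply hnot
    refine ⟨R.refl α * v, mul_mem (refl_mem_WsubJ hα) hv, a, ha, ?_⟩
    rw [LinearEquiv.mul_apply, ← h, refl_refl' hαP]

lemma PhiJone_inv (hB : IsBase R Pos Δ) {K : Set V} (hK : K ⊆ Δ) {v : V ≃ₗ[ℝ] V}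
    (hv : v ∈ WsubJ R K) : ∀ γ, γ ∈ PhiJone R Pos K ↔ v γ ∈ PhiJone R Pos K := by
  refine Subgroup.closure_induction
    (p := fun v _ => ∀ γ, γ ∈ PhiJone R Pos K ↔ v γ ∈ PhiJone R Pos K) ?_ ?_ ?_ ?_ hv
  · rintro _ ⟨α, hα, rfl⟩ γ
    refine ⟨PhiJone_refl hB hK hα, fun h => ?_⟩
    have := PhiJone_refl hB hK hα h
    rwa [refl_refl' (hB.delta_Phi (hK hα))] at this
  · intro γ; exact Iff.rfl
  · intro a b _ _ ha hb γ
    rw [hb γ, ha (b γ)]; rfl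
  · intro a _ ha γ
    rw [ha (a⁻¹ γ), app_inv]

lemma PhiJ_mul (hB : IsBase R Pos Δ) {K : Set V} (hK : K ⊆ Δ) {v : V ≃ₗ[ℝ] V}
    (hv : v ∈ WsubJ R K) (w : V ≃ₗ[ℝ] V) : PhiJ R Pos K (w * v) = PhiJ R Pos K w := by
  ext β
  rw [mem_PhiJ, mem_PhiJ, mul_inv_rev, LinearEquiv.mul_apply,
    ← PhiJone_inv hB hK (inv_mem hv)]

lemma PhiJ_anti {J K : Set V} (h : J ⊆ K) (w : V ≃ₗ[ℝ] V) :
    PhiJ R Pos K w ⊆ PhiJ R Pos J w := by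
  intro β hβ
  rw [mem_PhiJ] at hβ ⊢
  refine ⟨hβ.1, ?_⟩
  rintro ⟨v, hv, a, ha, he⟩
  exact hβ.2 ⟨v, WsubJ_mono h hv, a, h ha, he⟩

/-- Key geometric fact: a face of type `J` in the cone of `D`, whose further face of type `K` is
`t`-positive, has that face in the cone too, provided `D` is `t`-positive. -/
lemma key_D (hB : IsBase R Pos Δ) {J K : Set V} (hK : K ⊆ Δ)
    {t : V →ₗ[ℝ] ℝ} {w : V ≃ₗ[ℝ] V}
    (h : ∀ α ∈ K, 0 < t (w α)) {D : Set V} (hDt : ∀ β ∈ D, 0 < t β)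
    (hD : D ⊆ PhiJ R Pos J w) : D ⊆ PhiJ R Pos K w := by
  intro β hβ
  have h1 := hD hβ
  rw [mem_PhiJ] at h1 ⊢
  refine ⟨h1.1, ?_⟩
  rintro ⟨v, hv, a, ha, he⟩
  have hs : -(w⁻¹ β) ∈ Submodule.span ℝ K := by
    rw [he]
    exact Submodule.neg_mem _ (WsubJ_span hB hK hv _ (Submodule.subset_span ha))
  have := hB.pos_span hK (f := t.comp w.toLinearMap) (fun a ha => h a ha)
    (hB.neg_pos_of h1.1.1 h1.1.2) hs
  simp only [LinearMap.comp_apply, LinearEquiv.coe_coe, map_neg] at this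
  rw [app_inv] at this
  have := hDt β hβ
  linarith

/-- Indicator function of the coset `w W_K`. -/
noncomputable def ind (R : RootSystemData V) (L : Type) [CommRing L] (K : Set V)
    (w : V ≃ₗ[ℝ] V) : (V ≃ₗ[ℝ] V) → L :=
  fun y => if w⁻¹ * y ∈ WsubJ R K then 1 else 0

/-- span of the indicators of `w W_{J ∪ α}` in the cone of `D` -/
noncomputable def Qs (R : RootSystemData V) (Pos Δ J D : Set V) (L : Type) [CommRing L] :
    Submodule L ((V ≃ₗ[ℝ] V) → L) :=
  Submodule.span L {h | ∃ α ∈ Δ, α ∉ J ∧ ∃ w ∈ weylGroup R, D ⊆ PhiJ R Pos (J ∪ {α}) w ∧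
    h = ind R L (J ∪ {α}) w}

/-- span of the indicators of `w W_J` in the cone of `D` -/
noncomputable def As (R : RootSystemData V) (Pos J D : Set V) (L : Type) [CommRing L] :
    Submodule L ((V ≃ₗ[ℝ] V) → L) :=
  Submodule.span L {h | ∃ w ∈ weylGroup R, D ⊆ PhiJ R Pos J w ∧ h = ind R L J w}

/-- invariant functions vanishing on minimal representatives outside `V^J` -/
noncomputable def Bs (R : RootSystemData V) (Δ J : Set V) (t : V →ₗ[ℝ] ℝ) (L : Type)
    [CommRing L] : Submodule L ((V ≃ₗ[ℝ] V) → L) where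
  carrier := {h | (∀ w, ∀ v ∈ WsubJ R J, h (w * v) = h w) ∧
    ∀ w ∈ weylGroup R, (∀ α ∈ J, 0 < t (w α)) → (∃ α ∈ Δ, α ∉ J ∧ 0 < t (w α)) → h w = 0}
  add_mem' := by
    rintro a b ⟨ha, ha'⟩ ⟨hb, hb'⟩
    refine ⟨fun w v hv => ?_, fun w hw h1 h2 => ?_⟩
    · simp only [Pi.add_apply]; rw [ha w v hv, hb w v hv]
    · simp only [Pi.add_apply]; rw [ha' w hw h1 h2, hb' w hw h1 h2, add_zero]
  zero_mem' := ⟨fun _ _ _ => rfl, fun _ _ _ _ => rfl⟩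
  smul_mem' := by
    rintro c a ⟨ha, ha'⟩
    refine ⟨fun w v hv => ?_, fun w hw h1 h2 => ?_⟩
    · simp only [Pi.smul_apply]; rw [ha w v hv]
    · simp only [Pi.smul_apply]; rw [ha' w hw h1 h2, smul_zero]

lemma ind_mul (L : Type) [CommRing L] {K : Set V} (w y : V ≃ₗ[ℝ] V) {v : V ≃ₗ[ℝ] V}
    (hv : v ∈ WsubJ R K) : ind R L K w (y * v) = ind R L K w y := by
  unfold ind
  rw [← mul_assoc, Subgroup.mul_mem_cancel_right _ hv]

lemma ind_congr (L : Type) [CommRing L] {K : Set V} (w : V ≃ₗ[ℝ] V) {v : V ≃ₗ[ℝ] V}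
    (hv : v ∈ WsubJ R K) : ind R L K (w * v) = ind R L K w := by
  unfold ind
  funext y
  rw [mul_inv_rev, mul_assoc, Subgroup.mul_mem_cancel_left _ (inv_mem hv)]

/-- decomposition of a coset of `W_K` into cosets of `W_J`, via representatives -/
lemma ind_decomp (hB : IsBase R Pos Δ) (L : Type) [CommRing L] {J K : Set V} (hJK : J ⊆ K)
    (hK : K ⊆ Δ) {t : V →ₗ[ℝ] ℝ} (ht : Reg R t) {w : V ≃ₗ[ℝ] V} (hw : w ∈ weylGroup R)
    (X : Finset (V ≃ₗ[ℝ] V))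
    (hX : ∀ x, x ∈ X ↔ (x ∈ weylGroup R ∧ (∀ α ∈ J, 0 < t (x α)) ∧ w⁻¹ * x ∈ WsubJ R K)) :
    ind R L K w = ∑ x ∈ X, ind R L J x := by
  obtain ⟨lam, hlam⟩ := exists_rho hB
  funext y
  rw [Finset.sum_apply]
  by_cases hy : w⁻¹ * y ∈ WsubJ R K
  · have hyW : y ∈ weylGroup R := by
      have := mul_mem hw (WsubJ_le_weyl (hK.trans hB.delta_Phi) hy)
      rwa [mul_inv_cancel_left] at this
    obtain ⟨v, hv, hpos, -⟩ := coset_max hB hlam (hJK.trans hK) ht hyW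
    have hmem : y * v ∈ X := by
      rw [hX]
      refine ⟨mul_mem hyW (WsubJ_le_weyl ((hJK.trans hK).trans hB.delta_Phi) hv), hpos, ?_⟩
      rw [← mul_assoc]; exact mul_mem hy (WsubJ_mono hJK hv)
    rw [Finset.sum_eq_single (y * v)]
    · unfold ind
      rw [if_pos hy, if_pos]
      rw [mul_inv_rev, inv_mul_cancel_right]; exact inv_mem hv
    · intro x hx hne
      unfold ind
      rw [if_neg]
      intro hxy
      apply hne
      have h1 := ((hX x).1 hx).2.1
      have h2 := coset_unique hB (hJK.trans hK) (f := t) (w := x) (v := x⁻¹ * (y * v)) h1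
        (by rw [← mul_assoc]; exact mul_mem hxy hv)
        (fun α hα => by
          rw [← LinearEquiv.mul_apply, mul_inv_cancel_left]; exact hpos α hα)
      exact inv_mul_eq_one.1 h2
    · intro h; exact absurd hmem h
  · unfold ind
    rw [if_neg hy, Finset.sum_eq_zero]
    intro x hx
    rw [if_neg]
    intro h
    apply hy
    have := mul_mem ((hX x).1 hx).2.2 (WsubJ_mono hJK h)
    rwa [mul_assoc, mul_inv_cancel_left] at this

lemma As_le (hB : IsBase R Pos Δ) (L : Type) [CommRing L] {J D : Set V} (hJ : J ⊆ Δ)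
    {t : V →ₗ[ℝ] ℝ} (ht : Reg R t) (hDt : ∀ β ∈ D, 0 < t β) :
    As R Pos J D L ≤ Qs R Pos Δ J D L ⊔ Bs R Δ J t L := by
  obtain ⟨lam, hlam⟩ := exists_rho hB
  have main : ∀ n : ℕ, ∀ w ∈ weylGroup R, (∀ α ∈ J, 0 < t (w α)) → D ⊆ PhiJ R Pos J w →
      {x | x ∈ weylGroup R ∧ t (x lam) < t (w lam)}.ncard = n →
      ind R L J w ∈ Qs R Pos Δ J D L ⊔ Bs R Δ J t L := by
    intro n
    induction n using Nat.strong_induction_on with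
    | _ n ih =>
      intro w hw hpos hD hn
      by_cases hV : ∃ α ∈ Δ, α ∉ J ∧ 0 < t (w α)
      · obtain ⟨α, hα, hαJ, hwα⟩ := hV
        have hKΔ : J ∪ {α} ⊆ Δ := Set.union_subset hJ (by simpa using hα)
        have hposK : ∀ a ∈ J ∪ {α}, 0 < t (w a) := by
          rintro a (ha | rfl)
          · exact hpos a ha
          · exact hwα
        have hDK : D ⊆ PhiJ R Pos (J ∪ {α}) w :=
          key_D hB hKΔ hposK hDt hD
        have hXfin : {x | x ∈ weylGroup R ∧ (∀ α ∈ J, 0 < t (x α)) ∧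
            w⁻¹ * x ∈ WsubJ R (J ∪ {α})}.Finite :=
          (weyl_finite R).subset (fun x hx => hx.1)
        have hdec := ind_decomp hB L (J := J) Set.subset_union_left hKΔ ht hw hXfin.toFinset
          (fun x => by simp)
        have hwX : w ∈ hXfin.toFinset := by
          rw [Set.Finite.mem_toFinset]
          exact ⟨hw, hpos, by rw [inv_mul_cancel]; exact one_mem _⟩
        rw [← Finset.add_sum_erase _ _ hwX] at hdec
        rw [eq_sub_of_add_eq hdec.symm]
        refine Submodule.sub_mem _ (Submodule.mem_sup_left ?_) (Submodule.sum_mem _ ?_)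
        · exact Submodule.subset_span ⟨α, hα, hαJ, w, hw, hDK, rfl⟩
        · intro x hx
          rw [Finset.mem_erase, Set.Finite.mem_toFinset] at hx
          obtain ⟨hne, hxW, hxpos, hxK⟩ := hx
          have hlt : t (x lam) < t (w lam) := by
            have := lt_of_pos hB hlam hKΔ ht hw hposK hxK
              (fun h => hne (inv_mul_eq_one.1 h).symm)
            rwa [← LinearEquiv.mul_apply, mul_inv_cancel_left] at this
          refine ih _ ?_ x hxW hxpos ?_ rfl
          · rw [← hn]
            apply Set.ncard_lt_ncard
            · refine ⟨fun z hz => ⟨hz.1, hz.2.trans hlt⟩, fun h => ?_⟩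
              exact lt_irrefl _ (h ⟨hxW, hlt⟩ : x ∈ weylGroup R ∧ _).2
            · exact (weyl_finite R).subset (fun z hz => hz.1)
          · refine subset_trans ?_ (PhiJ_anti (Set.subset_union_left (t := {α})) x)
            have := PhiJ_mul hB hKΔ hxK w
            rw [mul_inv_cancel_left] at this
            rw [this]; exact hDK
      · refine Submodule.mem_sup_right ⟨fun y v hv => ind_mul L w y hv, ?_⟩
        intro y hy hypos hyex
        unfold ind
        rw [if_neg]
        intro hmem
        apply hV
        have h2 := coset_unique hB hJ (f := t) (w := w) hpos hmem
          (fun α hα => by rw [← LinearEquiv.mul_apply, mul_inv_cancel_left]; exact hypos α hα)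
        rw [inv_mul_eq_one.1 h2]; exact hyex
  refine Submodule.span_le.2 ?_
  rintro _ ⟨w, hw, hD, rfl⟩
  obtain ⟨v, hv, hpos, -⟩ := coset_max hB hlam hJ ht hw
  have := main _ (w * v) (mul_mem hw (WsubJ_le_weyl (hJ.trans hB.delta_Phi) hv)) hpos
    (by rw [PhiJ_mul hB hJ hv]; exact hD) rfl
  rwa [ind_congr L w hv] at this

/-- sign character -/
noncomputable def sg (L : Type) [CommRing L] (v : V ≃ₗ[ℝ] V) : L :=
  if 0 < LinearMap.det v.toLinearMap then 1 else -1

lemma sg_mul_refl (R : RootSystemData V) (L : Type) [CommRing L] {α : V} (hα : α ∈ R.Phi)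
    (v : V ≃ₗ[ℝ] V) : sg L (v * R.refl α) = - sg L v := by
  have : Module.Finite ℝ V := ⟨⟨R.finite.toFinset, by simpa using R.span_top⟩⟩
  have h1 : LinearMap.det (R.refl α).toLinearMap = -1 := by
    have : (R.refl α).toLinearMap = LinearMap.transvection (R.pairing α) (-α) := by
      ext x
      rw [LinearMap.transvection.apply]
      simp [refl_apply' hα, sub_eq_add_neg]
    rw [this, LinearMap.transvection.det, map_neg, R.pairing_self α hα]; norm_num
  have h2 : LinearMap.det (v * R.refl α).toLinearMap = - LinearMap.det v.toLinearMap := by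
    have : (v * R.refl α).toLinearMap = v.toLinearMap * (R.refl α).toLinearMap := rfl
    rw [this, map_mul, h1]; ring
  have h3 : LinearMap.det v.toLinearMap ≠ 0 := (LinearEquiv.isUnit_det' v).ne_zero
  unfold sg
  rw [h2]
  rcases lt_or_gt_of_ne h3 with h | h
  · rw [if_pos (by linarith), if_neg (by linarith), neg_neg]
  · rw [if_neg (by linarith), if_pos h]

lemma phi_zero (hB : IsBase R Pos Δ) (L : Type) [CommRing L] {J D : Set V}
    (F : Finset (V ≃ₗ[ℝ] V)) (hF : ∀ v, v ∈ F ↔ v ∈ WsubJ R (Δ \ J))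
    {h : (V ≃ₗ[ℝ] V) → L} (hh : h ∈ Qs R Pos Δ J D L) (w : V ≃ₗ[ℝ] V) :
    ∑ v ∈ F, sg L v * h (w * v) = 0 := by
  refine Submodule.span_induction (p := fun h _ => ∑ v ∈ F, sg L v * h (w * v) = 0)
    ?_ ?_ ?_ ?_ hh
  · rintro _ ⟨α, hα, hαJ, x, hx, -, rfl⟩
    have hαP := hB.delta_Phi hα
    refine Finset.sum_involution (fun v _ => v * R.refl α) ?_ ?_ ?_ ?_
    · intro v hv
      rw [sg_mul_refl R L hαP, ← mul_assoc, ind_mul L x (w * v) (refl_mem_WsubJ (by simp))]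
      ring
    · intro v hv _ heq
      have h1 : R.refl α = 1 := by simpa using heq
      have h2 := refl_self' hαP
      rw [h1] at h2
      have h3 : α = -α := h2
      have h4 := congrArg (R.pairing α) h3
      rw [map_neg, R.pairing_self α hαP] at h4
      norm_num at h4
    · intro v hv
      rw [hF] at hv ⊢
      exact mul_mem hv (refl_mem_WsubJ ⟨hα, hαJ⟩)
    · intro v hv
      rw [mul_assoc, refl_mul_self hαP, mul_one]
  · simp
  · intro a b _ _ ha hb
    simp only [Pi.add_apply, mul_add, Finset.sum_add_distrib]
    rw [ha, hb, add_zero]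
  · intro c a _ ha
    simp only [Pi.smul_apply, smul_eq_mul]
    have : ∀ v, sg L v * (c * a (w * v)) = c * (sg L v * a (w * v)) := fun v => by ring
    simp only [this]
    rw [← Finset.mul_sum, ha, mul_zero]

lemma Qs_supp (hB : IsBase R Pos Δ) (L : Type) [CommRing L] {J D : Set V} (hJ : J ⊆ Δ)
    {h : (V ≃ₗ[ℝ] V) → L} (hh : h ∈ Qs R Pos Δ J D L) {w : V ≃ₗ[ℝ] V}
    (hw : w ∉ weylGroup R) : h w = 0 := by
  refine Submodule.span_induction (p := fun h _ => h w = 0) ?_ ?_ ?_ ?_ hh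
  · rintro _ ⟨α, hα, hαJ, x, hx, -, rfl⟩
    unfold ind
    rw [if_neg]
    intro hmem
    apply hw
    have hKΔ : J ∪ {α} ⊆ Δ := Set.union_subset hJ (by simpa using hα)
    have := mul_mem hx (WsubJ_le_weyl (hKΔ.trans hB.delta_Phi) hmem)
    rwa [mul_inv_cancel_left] at this
  · rfl
  · intro a b _ _ ha hb; simp [ha, hb]
  · intro c a _ ha; simp [ha]

lemma Bs_inter (hB : IsBase R Pos Δ) (L : Type) [CommRing L] {J D : Set V} (hJ : J ⊆ Δ)
    {t : V →ₗ[ℝ] ℝ} (ht : Reg R t)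
    {h : (V ≃ₗ[ℝ] V) → L} (hh : h ∈ Qs R Pos Δ J D L) (hb : h ∈ Bs R Δ J t L) : h = 0 := by
  obtain ⟨lam, hlam⟩ := exists_rho hB
  obtain ⟨hinv, hvan⟩ := hb
  have hCΔ : Δ \ J ⊆ Δ := Set.sdiff_subset
  have hJP := hJ.trans hB.delta_Phi
  have hFfin : (WsubJ R (Δ \ J) : Set (V ≃ₗ[ℝ] V)).Finite :=
    (weyl_finite R).subset (WsubJ_le_weyl (hCΔ.trans hB.delta_Phi))
  have main : ∀ n : ℕ, ∀ w ∈ weylGroup R, (∀ α ∈ J, 0 < t (w α)) →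
      {x | x ∈ weylGroup R ∧ t (w lam) < t (x lam)}.ncard = n → h w = 0 := by
    intro n
    induction n using Nat.strong_induction_on with
    | _ n ih =>
      intro w hw hpos hn
      by_cases hV : ∃ α ∈ Δ, α ∉ J ∧ 0 < t (w α)
      · exact hvan w hw hpos hV
      · have hneg : ∀ α ∈ Δ \ J, t (w α) < 0 := by
          intro α hα
          refine lt_of_le_of_ne (not_lt.1 fun hc => hV ⟨α, hα.1, hα.2, hc⟩) ?_
          exact ht _ (weyl_Phi hw _ (hB.delta_Phi hα.1))
        have hphi := phi_zero hB L hFfin.toFinset (fun v => by simp) hh w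
        rw [Finset.sum_eq_single 1] at hphi
        · have h1 : sg L (1 : V ≃ₗ[ℝ] V) = 1 := by
            unfold sg
            rw [if_pos]
            have : (1 : V ≃ₗ[ℝ] V).toLinearMap = LinearMap.id := rfl
            rw [this, LinearMap.det_id]; exact one_pos
          rwa [h1, one_mul, mul_one] at hphi
        · intro v hv hne
          have hv' : v ∈ WsubJ R (Δ \ J) := by simpa using hv
          have hlt := gt_of_neg hB hlam hCΔ ht hw hneg hv' hne
          have hwv : w * v ∈ weylGroup R :=
            mul_mem hw (WsubJ_le_weyl (hCΔ.trans hB.delta_Phi) hv')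
          obtain ⟨u, hu, hupos, humax⟩ := coset_max hB hlam hJ ht hwv
          have hle : t (w (v lam)) ≤ t ((w * v * u) lam) := by
            by_cases hu1 : (1 : V ≃ₗ[ℝ] V) = u
            · rw [← hu1, mul_one]; exact le_rfl
            · exact (humax 1 (one_mem _) hu1).le
          have hlt2 : t (w lam) < t ((w * v * u) lam) := lt_of_lt_of_le hlt hle
          have hz : h (w * v * u) = 0 := by
            refine ih _ ?_ _ (mul_mem hwv (WsubJ_le_weyl hJP hu)) hupos rfl
            rw [← hn]
            apply Set.ncard_lt_ncard
            · refine ⟨fun z hz => ⟨hz.1, hlt2.trans hz.2⟩, fun hc => ?_⟩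
              exact lt_irrefl _ (hc ⟨mul_mem hwv (WsubJ_le_weyl hJP hu), hlt2⟩ :
                w * v * u ∈ weylGroup R ∧ _).2
            · exact (weyl_finite R).subset (fun z hz => hz.1)
          rw [hinv _ _ hu] at hz
          rw [hz, mul_zero]
        · intro hc
          exact absurd (by simp) hc
  funext y
  by_cases hy : y ∈ weylGroup R
  · obtain ⟨u, hu, hupos, -⟩ := coset_max hB hlam hJ ht hy
    rw [← hinv y u hu]
    exact main _ _ (mul_mem hy (WsubJ_le_weyl hJP hu)) hupos rfl
  · exact Qs_supp hB L hJ hh hy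

lemma Qs_mono (L : Type) [CommRing L] {J D D' : Set V} (h : D' ⊆ D) :
    Qs R Pos Δ J D L ≤ Qs R Pos Δ J D' L := by
  apply Submodule.span_mono
  rintro _ ⟨α, hα, hαJ, w, hw, hD, rfl⟩
  exact ⟨α, hα, hαJ, w, hw, h.trans hD, rfl⟩

lemma main_inter (hB : IsBase R Pos Δ) (L : Type) [CommRing L] {J D : Set V} (hJ : J ⊆ Δ)
    (hDqp : IsQuasiParabolic R Pos J D)
    {h : (V ≃ₗ[ℝ] V) → L} (hh : h ∈ As R Pos J D L) (hq : h ∈ Qs R Pos Δ J ∅ L) :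
    h ∈ Qs R Pos Δ J D L := by
  obtain ⟨Θ, ⟨w0, hw0⟩, hΘ, hDΘ⟩ := hDqp
  obtain ⟨t0, ht0⟩ := hB.exists_ht
  have hW := hΘ hw0
  let t : V →ₗ[ℝ] ℝ := -(t0.comp (w0⁻¹ : V ≃ₗ[ℝ] V).toLinearMap)
  have htv : ∀ x, t x = - t0 (w0⁻¹ x) := fun x => rfl
  have ht : Reg R t := by
    intro β hβ
    rw [htv]
    exact neg_ne_zero.2 (ht0 _ (weyl_Phi (inv_mem hW) _ hβ)).2
  have hDt : ∀ β ∈ D, 0 < t β := by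
    intro β hβ
    have h1 : β ∈ PhiJ R Pos J w0 := by
      rw [hDΘ] at hβ
      exact Set.mem_iInter₂.1 hβ w0 hw0
    rw [mem_PhiJ] at h1
    have h2 := ht0 _ h1.1.1
    have h3 : ¬ 0 < t0 (w0⁻¹ β) := fun hc => h1.1.2 (h2.1.2 hc)
    have h4 := lt_of_le_of_ne (not_lt.1 h3) h2.2
    rw [htv]; linarith
  obtain ⟨q, hqD, b, hb, rfl⟩ := Submodule.mem_sup.1 (As_le hB L hJ ht hDt hh)
  have hbQ : b ∈ Qs R Pos Δ J ∅ L := by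
    have := Submodule.sub_mem _ hq (Qs_mono L (Set.empty_subset D) hqD)
    rwa [add_sub_cancel_left] at this
  rw [Bs_inter hB L hJ ht hbQ hb, add_zero]
  exact hqD

/-- The embedding of `L[W^J]` into functions. -/
noncomputable def TJ (R : RootSystemData V) (Pos J : Set V) (L : Type) [CommRing L] :
    ((↥(WupJ R Pos J)) →₀ L) →ₗ[L] ((V ≃ₗ[ℝ] V) → L) :=
  Finsupp.linearCombination L (fun w : ↥(WupJ R Pos J) => ind R L J (w : V ≃ₗ[ℝ] V))

lemma TJ_single (L : Type) [CommRing L] {J : Set V} (w : ↥(WupJ R Pos J)) :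
    TJ R Pos J L (Finsupp.single w 1) = ind R L J w.1 := by
  simp [TJ]

lemma TJ_inj (hB : IsBase R Pos Δ) (L : Type) [CommRing L] {J : Set V} (hJ : J ⊆ Δ) :
    Function.Injective (TJ R Pos J L) := by
  obtain ⟨t, ht⟩ := hB.exists_ht
  have key : ∀ (f : (↥(WupJ R Pos J)) →₀ L) (w : ↥(WupJ R Pos J)), TJ R Pos J L f w.1 = f w := by
    intro f w
    rw [TJ, Finsupp.linearCombination_apply, Finsupp.sum, Finset.sum_apply]
    rw [Finset.sum_eq_single w]
    · simp only [Pi.smul_apply, ind, smul_eq_mul]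
      rw [if_pos (by rw [inv_mul_cancel]; exact one_mem _), mul_one]
    · intro x _ hne
      simp only [Pi.smul_apply, ind, smul_eq_mul]
      rw [if_neg, mul_zero]
      intro hmem
      apply hne
      apply Subtype.ext
      have hp : ∀ y : ↥(WupJ R Pos J), ∀ α ∈ J, 0 < t (y.1 α) := fun y α hα =>
        (ht _ (hB.pos_sub (y.2.2 α hα))).1.1 (y.2.2 α hα)
      have h2 := coset_unique hB hJ (f := t) (w := x.1) (hp x) hmem
        (fun α hα => by rw [← LinearEquiv.mul_apply, mul_inv_cancel_left]; exact hp w α hα)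
      exact inv_mul_eq_one.1 h2
    · intro h
      rw [Finsupp.notMem_support_iff.1 h, zero_smul]; rfl
  intro f g hfg
  ext w
  rw [← key f w, ← key g w, hfg]

lemma coset_sub {J K : Set V} (h : J ⊆ K) (x w : V ≃ₗ[ℝ] V) :
    (x • (WsubJ R J : Set (V ≃ₗ[ℝ] V)) ⊆ w • (WsubJ R K : Set (V ≃ₗ[ℝ] V))) ↔
      w⁻¹ * x ∈ WsubJ R K := by
  constructor
  · intro hs
    have h1 : x ∈ x • (WsubJ R J : Set (V ≃ₗ[ℝ] V)) := ⟨1, one_mem _, by simp⟩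
    obtain ⟨v, hv, hx⟩ := hs h1
    have : x = w * v := hx.symm
    rw [this, inv_mul_cancel_left]; exact hv
  · rintro hx _ ⟨v, hv, rfl⟩
    refine ⟨w⁻¹ * (x * v), ?_, by simp⟩
    rw [← mul_assoc]; exact mul_mem hx (WsubJ_mono h hv)

lemma WupJ_finite (R : RootSystemData V) (Pos J : Set V) : Finite (WupJ R Pos J) :=
  ((weyl_finite R).subset (fun _ h => h.1)).to_subtype

lemma MJd_single (L : Type) [CommRing L] {J : Set V} (F : Fintype (WupJ R Pos J))
    (x : MJdom R Pos Δ J) :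
    MJd R Pos Δ J L (Finsupp.single x 1) = ∑ w' : ↥(WupJ R Pos J),
      if (x.2.1)⁻¹ * w'.1 ∈ WsubJ R (J ∪ {(x.1 : V)}) then Finsupp.single w' (1 : L) else 0 := by
  unfold MJd
  rw [Finsupp.lift_apply, Finsupp.sum_single_index (by simp), one_smul,
    finsum_eq_sum_of_fintype]
  refine Finset.sum_congr rfl fun w' _ => ?_
  simp only [coset_sub (R := R) (J := J) (K := J ∪ {(x.1 : V)}) Set.subset_union_left]

lemma TJ_MJd_single (hB : IsBase R Pos Δ) (L : Type) [CommRing L] {J : Set V} (hJ : J ⊆ Δ)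
    (x : MJdom R Pos Δ J) :
    TJ R Pos J L (MJd R Pos Δ J L (Finsupp.single x 1)) = ind R L (J ∪ {(x.1 : V)}) x.2.1 := by
  obtain ⟨t, ht⟩ := hB.exists_ht
  have hfin := WupJ_finite R Pos J
  have F := Fintype.ofFinite (WupJ R Pos J)
  have hKΔ : J ∪ {(x.1 : V)} ⊆ Δ := Set.union_subset hJ (by simpa using x.1.2.1)
  rw [MJd_single L F, map_sum]
  rw [ind_decomp hB L (J := J) (K := J ∪ {(x.1 : V)}) Set.subset_union_left hKΔ
    (t := t) (fun β hβ => (ht β hβ).2) x.2.2.1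
    ((Finset.univ.filter (fun w' : ↥(WupJ R Pos J) =>
      (x.2.1)⁻¹ * w'.1 ∈ WsubJ R (J ∪ {(x.1 : V)}))).map (Function.Embedding.subtype _))]
  · rw [Finset.sum_map, Finset.sum_filter]
    refine Finset.sum_congr rfl fun w' _ => ?_
    split_ifs with h
    · rw [TJ_single]; rfl
    · rw [map_zero]
  · intro y
    rw [Finset.mem_map]
    constructor
    · rintro ⟨w', hw', rfl⟩
      refine ⟨w'.2.1, fun α hα => ?_, (Finset.mem_filter.1 hw').2⟩
      exact (ht _ (hB.pos_sub (w'.2.2 α hα))).1.1 (w'.2.2 α hα)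
    · rintro ⟨h1, h2, h3⟩
      refine ⟨⟨y, h1, fun α hα => ?_⟩, Finset.mem_filter.2 ⟨Finset.mem_univ _, h3⟩, rfl⟩
      exact (ht _ (weyl_Phi h1 _ (hB.delta_Phi (hJ hα)))).1.2 (h2 α hα)

/-- The inclusion of index types. -/
noncomputable def incX {J D : Set V} (x : MJdomD R Pos Δ J D) : MJdom R Pos Δ J :=
  ⟨x.1, Set.inclusion (WupJD_subset R Pos (J ∪ {(x.1 : V)}) D) x.2⟩

lemma inclDom_single (L : Type) [CommRing L] {J D : Set V} (x : MJdomD R Pos Δ J D) (c : L) :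
    inclDom R Pos Δ J D L (Finsupp.single x c) = Finsupp.single (incX x) c :=
  Finsupp.mapDomain_single (f := incX (R := R) (Pos := Pos) (Δ := Δ) (J := J) (D := D))

lemma inclCod_single (L : Type) [CommRing L] {J D : Set V} (x : ↥(WupJD R Pos J D)) (c : L) :
    inclCod R Pos J D L (Finsupp.single x c) =
      Finsupp.single (Set.inclusion (WupJD_subset R Pos J D) x) c := by
  unfold inclCod
  rw [Finsupp.lmapDomain_apply, Finsupp.mapDomain_single]

/-- A linear map out of `X →₀ L` has range in `N` if it does on basis vectors. -/
lemma lin_mem {X L M : Type} [CommRing L] [AddCommGroup M] [Module L M]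
    (T : (X →₀ L) →ₗ[L] M) (N : Submodule L M) (h : ∀ x, T (Finsupp.single x 1) ∈ N)
    (f : X →₀ L) : T f ∈ N := by
  induction f using Finsupp.induction_linear with
  | zero => rw [map_zero]; exact zero_mem _
  | add f g hf hg => rw [map_add]; exact add_mem hf hg
  | single x c =>
    have : Finsupp.single x c = c • Finsupp.single x (1 : L) := by simp
    rw [this, map_smul]; exact N.smul_mem _ (h x)

lemma statement_2_aux (hBase : IsBase R Pos Δ)
    {J : Set V} (hJ : J ⊆ Δ) (L : Type) [CommRing L]
    {D : Set V} (hDqp : IsQuasiParabolic R Pos J D) :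
    (∀ f : (MJdomD R Pos Δ J D) →₀ L,
      ∃ g : (↥(WupJD R Pos J D)) →₀ L,
        MJd R Pos Δ J L (inclDom R Pos Δ J D L f) = inclCod R Pos J D L g) ∧
    (∀ g : (↥(WupJD R Pos J D)) →₀ L,
      MJnabla R Pos Δ J L (inclCod R Pos J D L g) = 0 ↔
      ∃ f : (MJdomD R Pos Δ J D) →₀ L,
        MJd R Pos Δ J L (inclDom R Pos Δ J D L f) = inclCod R Pos J D L g) := by
  have hnabla : ∀ y, MJnabla R Pos Δ J L y = 0 ↔ y ∈ LinearMap.range (MJd R Pos Δ J L) :=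
    fun y => Submodule.Quotient.mk_eq_zero _
  have hKΔ : ∀ α ∈ Δ, J ∪ {α} ⊆ Δ := fun α hα => Set.union_subset hJ (by simpa using hα)
  constructor
  · intro f
    have := lin_mem ((MJd R Pos Δ J L).comp (inclDom R Pos Δ J D L))
      (LinearMap.range (inclCod R Pos J D L)) ?_ f
    · obtain ⟨g, hg⟩ := this
      exact ⟨g, hg.symm⟩
    · intro x
      have hfin := WupJ_finite R Pos J
      have F := Fintype.ofFinite (WupJ R Pos J)
      rw [LinearMap.comp_apply, inclDom_single, MJd_single L F]
      refine Submodule.sum_mem _ fun w' _ => ?_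
      split_ifs with h
      · have hmem : w'.1 ∈ WupJD R Pos J D := by
          refine ⟨w'.2, subset_trans ?_ (PhiJ_anti (Set.subset_union_left (t := {(x.1 : V)})) _)⟩
          have h1 := PhiJ_mul (Pos := Pos) hBase (hKΔ _ x.1.2.1) h x.2.1
          have h2 : x.2.1 * (x.2.1⁻¹ * w'.1) = w'.1 := mul_inv_cancel_left _ _
          rw [← h2]
          exact h1 ▸ x.2.2.2
        exact ⟨Finsupp.single ⟨w'.1, hmem⟩ 1, inclCod_single L _ _⟩
      · exact zero_mem _
  · intro g
    rw [hnabla]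
    constructor
    · rintro ⟨f0, hf0⟩
      have hA : TJ R Pos J L (inclCod R Pos J D L g) ∈ As R Pos J D L := by
        refine lin_mem ((TJ R Pos J L).comp (inclCod R Pos J D L)) _ (fun x => ?_) g
        rw [LinearMap.comp_apply, inclCod_single, TJ_single]
        exact Submodule.subset_span ⟨x.1, x.2.1.1, x.2.2, rfl⟩
      have hQ : TJ R Pos J L (inclCod R Pos J D L g) ∈ Qs R Pos Δ J ∅ L := by
        rw [← hf0]
        refine lin_mem ((TJ R Pos J L).comp (MJd R Pos Δ J L)) _ (fun x => ?_) f0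
        rw [LinearMap.comp_apply, TJ_MJd_single hBase L hJ]
        exact Submodule.subset_span
          ⟨x.1.1, x.1.2.1, x.1.2.2, x.2.1, x.2.2.1, Set.empty_subset _, rfl⟩
      have hQD := main_inter hBase L hJ hDqp hA hQ
      have hle : Qs R Pos Δ J D L ≤ LinearMap.range
          ((TJ R Pos J L).comp ((MJd R Pos Δ J L).comp (inclDom R Pos Δ J D L))) := by
        refine Submodule.span_le.2 ?_
        rintro _ ⟨α, hα, hαJ, w, hw, hD, rfl⟩
        obtain ⟨t, ht⟩ := hBase.exists_ht
        obtain ⟨lam, hlam⟩ := exists_rho hBase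
        obtain ⟨v, hv, hpos, -⟩ := coset_max hBase hlam (hKΔ α hα) (t := t)
          (fun β hβ => (ht β hβ).2) hw
        have hKP := (hKΔ α hα).trans hBase.delta_Phi
        have hwv := mul_mem hw (WsubJ_le_weyl hKP hv)
        have hmem : w * v ∈ WupJD R Pos (J ∪ {α}) D := by
          refine ⟨⟨hwv, fun a ha => ?_⟩, ?_⟩
          · exact (ht _ (weyl_Phi hwv _ (hKP ha))).1.2 (hpos a ha)
          · rw [PhiJ_mul hBase (hKΔ α hα) hv]; exact hD
        let x : MJdomD R Pos Δ J D := ⟨⟨α, hα, hαJ⟩, ⟨w * v, hmem⟩⟩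
        refine ⟨Finsupp.single x 1, ?_⟩
        rw [LinearMap.comp_apply, LinearMap.comp_apply, inclDom_single,
          TJ_MJd_single hBase L hJ]
        exact ind_congr L w hv
      obtain ⟨f, hf⟩ := hle hQD
      exact ⟨f, TJ_inj hBase L hJ hf⟩
    · rintro ⟨f, hf⟩
      exact ⟨_, hf⟩

end Helpers

/-- For a `J`-quasi-parabolic subset `D ⊆ Φ`, the map `∂` carries
`⊕_{α ∈ Δ\J} L[W^{J∪{α}}(D)]` into `L[W^J(D)]`, and the restricted sequence
`⊕_{α ∈ Δ\J} L[W^{J∪{α}}(D)] → L[W^J(D)] → M_J(L)` is exact at the middle term: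
an element of `L[W^J(D)]` is killed by `∇` iff it is in the image of the
restriction of `∂`. -/
theorem statement_2 {V : Type} [AddCommGroup V] [Module ℝ V]
    (R : RootSystemData V) (Pos Δ : Set V) (hBase : IsBase R Pos Δ)
    (J : Set V) (hJ : J ⊆ Δ) (L : Type) [CommRing L]
    (D : Set V) (hD : D ⊆ R.Phi) (hDqp : IsQuasiParabolic R Pos J D) :
    (∀ f : (MJdomD R Pos Δ J D) →₀ L,
      ∃ g : (↥(WupJD R Pos J D)) →₀ L,
        MJd R Pos Δ J L (inclDom R Pos Δ J D L f) = inclCod R Pos J D L g) ∧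
    (∀ g : (↥(WupJD R Pos J D)) →₀ L,
      MJnabla R Pos Δ J L (inclCod R Pos J D L g) = 0 ↔
      ∃ f : (MJdomD R Pos Δ J D) →₀ L,
        MJd R Pos Δ J L (inclDom R Pos Δ J D L f) = inclCod R Pos J D L g) := by
  exact statement_2_aux hBase hJ L hDqp

end PaperSp
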